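/- There are exactly 49 Carmichael numbers less than 10^18 having exactly 11 distinct prime factors. -/

import Mathlib

/-- A Carmichael number: a composite natural number `N` such that
`b ^ (N - 1) ≡ 1 [MOD N]` for every `b` coprime to `N`. -/
def IsCarmichael (N : ℕ) : Prop :=
  1 < N ∧ ¬ N.Prime ∧ ∀ b : ℕ, Nat.Coprime b N → b ^ (N - 1) ≡ 1 [MOD N]

theorem carm_unit {N : ℕ} (h : IsCarmichael N) (u : (ZMod N)ˣ) : u ^ (N - 1) = 1 := by
  obtain ⟨h1, _, h3⟩ := h
  have : NeZero N := ⟨by omega⟩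
  have := h3 (u : ZMod N).val (ZMod.val_coe_unit_coprime u)
  have h4 := (ZMod.natCast_eq_natCast_iff _ _ _).2 this
  push_cast at h4
  rw [ZMod.natCast_val, ZMod.cast_id] at h4
  ext
  simpa using h4

theorem carm_sq {N : ℕ} (h : IsCarmichael N) : Squarefree N := by
  have h1 := h.1
  have : NeZero N := ⟨by omega⟩
  rw [Nat.squarefree_iff_prime_squarefree]
  intro p hp hpp
  have hpN : p ∣ N := (Dvd.intro _ rfl).trans hpp
  have : Fact p.Prime := ⟨hp⟩
  have h2 : p ∣ Fintype.card (ZMod N)ˣ := by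
    rw [ZMod.card_units_eq_totient]
    have := Nat.totient_dvd_of_dvd hpp
    rw [← pow_two, Nat.totient_prime_pow hp (by norm_num)] at this
    exact (Dvd.intro (p - 1) (by simp)).trans this
  obtain ⟨x, hx⟩ := exists_prime_orderOf_dvd_card p h2
  have h3 := orderOf_dvd_of_pow_eq_one (carm_unit h x)
  rw [hx] at h3
  have h4 : p ∣ 1 := by
    have := (Nat.dvd_sub hpN h3)
    rwa [Nat.sub_sub_self (by omega)] at this
  exact hp.one_lt.ne' (Nat.dvd_one.1 h4)

theorem carm_dvd {N : ℕ} (h : IsCarmichael N) (p : ℕ) (hp : p.Prime) (hpN : p ∣ N) :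
    p - 1 ∣ N - 1 := by
  have h1 := h.1
  have : NeZero N := ⟨by omega⟩
  have : Fact p.Prime := ⟨hp⟩
  obtain ⟨g, hg⟩ := IsCyclic.exists_generator (α := (ZMod p)ˣ)
  obtain ⟨u, hu⟩ := ZMod.unitsMap_surjective hpN g
  have h2 := congrArg (ZMod.unitsMap hpN) (carm_unit h u)
  rw [map_pow, hu, map_one] at h2
  have h3 := orderOf_dvd_of_pow_eq_one h2
  rwa [orderOf_eq_card_of_forall_mem_zpowers hg, Nat.card_eq_fintype_card, ZMod.card_units] at h3

theorem carm_of {N : ℕ} (h1 : 1 < N) (hn : ¬ N.Prime) (hs : Squarefree N)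
    (hd : ∀ p : ℕ, p.Prime → p ∣ N → p - 1 ∣ N - 1) : IsCarmichael N := by
  refine ⟨h1, hn, fun b hb => ?_⟩
  have hb0 : 1 ≤ b ^ (N - 1) := by
    apply Nat.one_le_pow
    rcases Nat.eq_zero_or_pos b with rfl | h
    · simp at hb; omega
    · exact h
  symm
  rw [Nat.modEq_iff_dvd' hb0]
  generalize hm : b ^ (N - 1) - 1 = m
  rw [← Nat.prod_primeFactors_of_squarefree hs]
  apply Finset.prod_primes_dvd
  · intro p hp; exact (Nat.prime_of_mem_primeFactors hp).prime
  · intro p hp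
    have hpp := Nat.prime_of_mem_primeFactors hp
    have hpN := Nat.dvd_of_mem_primeFactors hp
    have : Fact p.Prime := ⟨hpp⟩
    rw [← hm, ← Nat.modEq_iff_dvd' hb0]
    obtain ⟨t, ht⟩ := hd p hpp hpN
    have hc : Nat.Coprime b p := Nat.Coprime.coprime_dvd_right hpN hb
    have := Nat.ModEq.pow_totient hc
    rw [Nat.totient_prime hpp] at this
    have h5 := this.pow t
    rw [← pow_mul, ← ht, one_pow] at h5
    exact h5.symm

def plist : List Nat :=
  nat_lit 3 :: nat_lit 5 :: nat_lit 7 :: nat_lit 11 :: nat_lit 13 :: nat_lit 17 :: nat_lit 19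
  :: nat_lit 23 :: nat_lit 29 :: nat_lit 31 :: nat_lit 37 :: nat_lit 41 :: nat_lit 43 ::
  nat_lit 47 :: nat_lit 53 :: nat_lit 59 :: nat_lit 61 :: nat_lit 67 :: nat_lit 71 :: 
  nat_lit 73 :: nat_lit 79 :: nat_lit 83 :: nat_lit 89 :: nat_lit 97 :: nat_lit 101 :: nat_lit 103 ::
  nat_lit 107 :: nat_lit 109 :: nat_lit 113 :: nat_lit 127 :: nat_lit 131 :: nat_lit 137 ::
  nat_lit 139 :: nat_lit 149 :: nat_lit 151 :: nat_lit 157 :: nat_lit 163 :: nat_lit 167 ::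
  nat_lit 173 :: nat_lit 179 :: nat_lit 181 :: nat_lit 191 :: nat_lit 193 :: nat_lit 197 ::
  nat_lit 199 :: nat_lit 211 :: nat_lit 223 :: nat_lit 227 :: nat_lit 229 :: nat_lit 233 ::
  nat_lit 239 :: nat_lit 241 :: nat_lit 251 :: nat_lit 257 :: nat_lit 263 :: nat_lit 269 ::
  nat_lit 271 :: nat_lit 277 :: nat_lit 281 :: nat_lit 283 :: nat_lit 293 :: nat_lit 307 ::
  nat_lit 311 :: nat_lit 313 :: nat_lit 317 :: nat_lit 331 :: nat_lit 337 :: nat_lit 347 ::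
  nat_lit 349 :: nat_lit 353 :: nat_lit 359 :: nat_lit 367 :: nat_lit 373 :: nat_lit 379 ::
  nat_lit 383 :: nat_lit 389 :: nat_lit 397 :: nat_lit 401 :: nat_lit 409 :: nat_lit 419 ::
  nat_lit 421 :: nat_lit 431 :: nat_lit 433 :: nat_lit 439 :: nat_lit 443 :: nat_lit 449 ::
  nat_lit 457 :: nat_lit 461 :: nat_lit 463 :: nat_lit 467 :: nat_lit 479 :: nat_lit 487 ::
  nat_lit 491 :: nat_lit 499 :: nat_lit 503 :: nat_lit 509 :: nat_lit 521 :: nat_lit 523 ::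
  nat_lit 541 :: nat_lit 547 :: nat_lit 557 :: nat_lit 563 :: nat_lit 569 :: nat_lit 571 ::
  nat_lit 577 :: nat_lit 587 :: nat_lit 593 :: nat_lit 599 :: nat_lit 601 :: nat_lit 607 ::
  nat_lit 613 :: nat_lit 617 :: nat_lit 619 :: nat_lit 631 :: nat_lit 641 :: nat_lit 643 ::
  nat_lit 647 :: nat_lit 653 :: nat_lit 659 :: nat_lit 661 :: nat_lit 673 :: nat_lit 677 ::
  nat_lit 683 :: nat_lit 691 :: nat_lit 701 :: nat_lit 709 :: nat_lit 719 :: nat_lit 727 ::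
  nat_lit 733 :: nat_lit 739 :: nat_lit 743 :: nat_lit 751 :: nat_lit 757 :: nat_lit 761 ::
  nat_lit 769 :: nat_lit 773 :: nat_lit 787 :: nat_lit 797 :: nat_lit 809 :: nat_lit 811 ::
  nat_lit 821 :: nat_lit 823 :: nat_lit 827 :: nat_lit 829 :: nat_lit 839 :: nat_lit 853 ::
  nat_lit 857 :: nat_lit 859 :: nat_lit 863 :: nat_lit 877 :: nat_lit 881 :: nat_lit 883 ::
  nat_lit 887 :: nat_lit 907 :: nat_lit 911 :: nat_lit 919 :: nat_lit 929 :: nat_lit 937 ::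
  nat_lit 941 :: nat_lit 947 :: nat_lit 953 :: nat_lit 967 :: nat_lit 971 :: nat_lit 977 ::
  nat_lit 983 :: nat_lit 991 :: nat_lit 997 :: nat_lit 1009 :: nat_lit 1013 :: nat_lit 1019 ::
  nat_lit 1021 :: nat_lit 1031 :: nat_lit 1033 :: nat_lit 1039 :: nat_lit 1049 :: nat_lit 1051
  :: nat_lit 1061 :: nat_lit 1063 :: nat_lit 1069 :: nat_lit 1087 :: nat_lit 1091 :: 
  nat_lit 1093 :: nat_lit 1097 :: nat_lit 1103 :: nat_lit 1109 :: nat_lit 1117 :: nat_lit 1123 ::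
  nat_lit 1129 :: nat_lit 1151 :: nat_lit 1153 :: nat_lit 1163 :: nat_lit 1171 :: nat_lit 1181
  :: nat_lit 1187 :: nat_lit 1193 :: nat_lit 1201 :: nat_lit 1213 :: nat_lit 1217 :: 
  nat_lit 1223 :: nat_lit 1229 :: nat_lit 1231 :: nat_lit 1237 :: nat_lit 1249 :: nat_lit 1259 ::
  nat_lit 1277 :: nat_lit 1279 :: nat_lit 1283 :: nat_lit 1289 :: nat_lit 1291 :: nat_lit 1297
  :: nat_lit 1301 :: nat_lit 1303 :: nat_lit 1307 :: nat_lit 1319 :: nat_lit 1321 :: 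
  nat_lit 1327 :: nat_lit 1361 :: nat_lit 1367 :: nat_lit 1373 :: nat_lit 1381 :: nat_lit 1399 ::
  nat_lit 1409 :: nat_lit 1423 :: nat_lit 1427 :: nat_lit 1429 :: []

def lamTab : Nat := nat_lit 0x180002940000000009c0000000000000000000000000000000000005000000000000000000000000001d0000000000000000000000000000000000000000000000001600000000000000000000930000000000000055400000000000000080000000000000000000000000000000000000000000000000000000000000000000000000000000000000000000060000000000000000a0005240000000000000000000000000000005180000000003c0001e00000000036000000000000000a80002100000000000000500000000001a4000460000000000000000000000000000000000000000000000012000000000000000000000000000c00000000000000000000000000000003300000000000000050000990000000000000022800000000000000480000000003200000000000000000000000000000000a000000000000000000004a000000000000004a0000000000000003a000000000000000000000000001800000000000000000001ec0000000000000000000000000300001b8000000000000000000000000000000000000000000000000000000000017000000000000000a0000000000000000f000000000000000000008a000000000000001f80000000000000044000000000060000d800000000168000000000000000000000000000000000000000000000002c0000000000000015c0001a000000000000000000000000007800041000000000000000000000000015800000000000000150001980000000000000000000000000080003f80000000000000037000000000060000000000000000000000000000000290000000000000007800000000000000000003d4000000000000001e000000000000000c0000000000840000000000000000000000000000000000001800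0000000000001a4000000000000002e00000000006000000000000000000001c000000000000000000000000012000000000000000000000180000000012c0000000000000000000000000000000000000000000000000000374000000000540000a0000000002400000000000000000000000000000000000035c00000000078000350000000002300000000000000000000000000000000000034400000000000000000000000002100015c000000001100001400000000000000000000000000d80003200000000000000000000000000000006300000000000000000000000001040000000000000000000000000000000000006000000000020000000000000000000001200000000009000000000000000c80000000000000000000138000000000f0000000000000001e000000000000000dc00000000000000000002cc00000000000000000000000001d000000000000000000001e0000000000000000000000000058000000000000000000003c000000000000004e0000000000c00000000000000000000000000000000a000114000000000000005100000000000000120000000000d40001000000000000000000000000000180000000000000000000000000000000cc0000f00000000018000000000000000c8000000000000000a000108000000000000001200000000000000248000000000000000000000000018000000000000000480002300000000000000230000000000000004500000000000000000000000000180000000000000012000000000000000000000000000000000000000000000000a80000600000000000000000000000000000003f000000000000001f4000000000a400000000000000000000a80000000014400000000000000000001dc0000000000000000000000000000001d00000000003c00016000000000090000000000000000000018000000000000000600000000009000000000000000120000a80000000000000000000000000060000b4000000000000000000000000008000000000000000000000a0000000000f00000000000000000000300000000000000017c00000000024000000000000000f00000000000000078000000000000000000016400000000000000140000000000e0001580000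000000000000000000000060000000000000002800000000000000000000000000000000000027000000000060000780000000006000000000000000000000000000000000000024000000000000000000000000005c000060000000000b0000000000000004800021000000000000001040000000000000020000000000000000c8000000000000000000000000002000060000000000000000e000000000090000e00000000004800000000000000000000000000000001800000000000000000000000000000003c00015000000000080000480000000000000000000000000060000b00000000000000015000000000000000a40000000006c00000000000000060000000000000002800012000000000000000000000000002c00008000000000000000180000000000c0000000000000000000000000000000000000600000000009000068000000000200000a0000000000400000000000000000000050000000000000005000000000018000000000000000300001800000000014000000000000000200003800000000000000060000000000000002c0000000000c00002000000000030000000000000000800003000000000000000140000000000c0000200000000001000008000000000040000100000200000000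

def goodF : List (List Nat) := [[5, 7, 13, 17, 23, 37, 59, 73, 109, 523, 577],
  [5, 7, 13, 19, 23, 37, 67, 73, 97, 109, 769],
  [5, 7, 17, 19, 23, 37, 53, 73, 79, 89, 233],
  [5, 7, 17, 19, 37, 53, 59, 79, 97, 109, 769],
  [5, 13, 17, 19, 23, 29, 43, 73, 127, 197, 353],
  [5, 13, 19, 23, 29, 37, 67, 73, 89, 97, 463],
  [7, 11, 13, 17, 19, 31, 37, 41, 61, 181, 3761],
  [7, 11, 13, 17, 19, 31, 37, 41, 101, 181, 1801],
  [7, 11, 13, 17, 19, 31, 37, 41, 181, 541, 641],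
  [7, 11, 13, 17, 19, 31, 37, 61, 109, 193, 433],
  [7, 11, 13, 17, 19, 31, 37, 73, 97, 193, 577],
  [7, 11, 13, 17, 19, 37, 41, 61, 101, 151, 1801],
  [7, 11, 13, 17, 19, 37, 41, 61, 181, 271, 401],
  [7, 11, 13, 17, 31, 59, 61, 97, 101, 181, 241],
  [7, 11, 13, 17, 37, 41, 47, 97, 101, 151, 401],
  [7, 11, 13, 19, 31, 37, 41, 61, 109, 163, 811],
  [7, 11, 13, 19, 31, 37, 47, 73, 97, 241, 271],
  [7, 11, 13, 19, 31, 37, 61, 73, 97, 101, 577],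
  [7, 11, 13, 19, 37, 59, 61, 73, 109, 139, 271],
  [7, 11, 17, 19, 31, 37, 41, 53, 157, 181, 313],
  [7, 11, 17, 19, 31, 37, 41, 73, 101, 193, 577],
  [7, 11, 17, 19, 31, 37, 47, 61, 73, 139, 317],
  [7, 11, 17, 19, 31, 37, 53, 61, 181, 193, 257],
  [7, 11, 17, 19, 37, 47, 53, 61, 73, 277, 313],
  [7, 13, 17, 19, 23, 31, 37, 73, 199, 241, 331],
  [7, 13, 17, 19, 23, 31, 41, 73, 89, 181, 397],
  [7, 13, 17, 19, 23, 37, 41, 61, 89, 97, 199],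
  [7, 13, 17, 19, 23, 37, 41, 73, 101, 199, 601],
  [7, 13, 17, 19, 31, 37, 41, 61, 73, 97, 271],
  [7, 13, 17, 19, 31, 37, 41, 61, 97, 199, 577],
  [7, 13, 19, 31, 37, 41, 67, 89, 97, 103, 199],
  [11, 13, 17, 19, 29, 31, 37, 41, 61, 127, 1009],
  [11, 13, 17, 19, 29, 31, 37, 43, 71, 211, 541],
  [11, 13, 17, 19, 29, 31, 41, 43, 47, 71, 1381],
  [11, 13, 17, 19, 29, 31, 41, 43, 127, 211, 241],
  [11, 13, 17, 19, 29, 37, 41, 43, 61, 151, 181],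
  [11, 13, 17, 19, 29, 37, 41, 61, 109, 181, 337],
  [11, 13, 17, 19, 29, 37, 43, 71, 97, 113, 281],
  [11, 13, 17, 19, 29, 41, 61, 71, 97, 113, 211],
  [11, 13, 17, 19, 31, 37, 41, 61, 71, 97, 181],
  [11, 13, 19, 29, 31, 37, 41, 43, 127, 181, 251],
  [11, 13, 19, 29, 31, 37, 41, 61, 113, 127, 241],
  [11, 13, 19, 29, 31, 41, 43, 97, 101, 127, 151],
  [13, 17, 19, 23, 29, 31, 37, 43, 67, 113, 127],
  [13, 17, 19, 23, 29, 31, 41, 43, 89, 97, 353],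
  [13, 17, 19, 23, 29, 31, 43, 61, 67, 71, 97],
  [13, 17, 19, 23, 29, 37, 41, 61, 73, 127, 331],
  [13, 17, 19, 29, 37, 41, 43, 71, 73, 97, 211],
  [13, 17, 23, 31, 37, 41, 43, 61, 67, 89, 109]]

def badF : List (List Nat) := [[5, 7, 13, 17, 19, 37, 67, 89, 139, 193, 641],
  [5, 7, 13, 19, 23, 37, 89, 97, 103, 241, 353],
  [5, 7, 13, 19, 47, 67, 97, 103, 919, 2113],
  [5, 7, 13, 23, 67, 73, 83, 97, 641, 3457],
  [5, 7, 17, 19, 23, 53, 67, 73, 89, 257, 433],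
  [5, 7, 17, 19, 23, 53, 67, 79, 89, 199, 353],
  [5, 7, 17, 19, 23, 59, 79, 89, 929, 7723],
  [5, 13, 17, 19, 29, 37, 67, 73, 113, 38737],
  [5, 13, 19, 23, 29, 37, 73, 89, 109, 13873],
  [5, 17, 19, 29, 37, 47, 67, 89, 683, 1657],
  [5, 17, 23, 29, 43, 67, 73, 79, 337, 2113],
  [5, 19, 29, 37, 43, 47, 67, 73, 137, 6073],
  [7, 11, 13, 17, 19, 31, 37, 107, 163, 48761],
  [7, 11, 13, 17, 19, 31, 37, 109, 139, 241, 631],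
  [7, 11, 13, 17, 19, 31, 41, 73, 149, 31081],
  [7, 11, 13, 17, 19, 37, 61, 97, 163, 77761],
  [7, 11, 13, 17, 19, 41, 73, 107, 139, 56923],
  [7, 11, 13, 17, 19, 41, 101, 109, 163, 28921],
  [7, 11, 13, 17, 31, 41, 61, 73, 163, 241, 257],
  [7, 11, 13, 17, 37, 41, 47, 61, 73, 109, 691],
  [7, 11, 13, 19, 31, 41, 73, 97, 109, 23041],
  [7, 11, 13, 19, 37, 41, 47, 97, 101, 109, 577],
  [7, 11, 13, 19, 37, 59, 61, 73, 97, 163, 331],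
  [7, 11, 17, 19, 31, 41, 53, 97, 157, 38593],
  [7, 11, 17, 19, 31, 41, 61, 101, 151, 33751],
  [7, 11, 17, 19, 31, 61, 79, 107, 1321, 1697],
  [7, 11, 17, 19, 37, 41, 61, 79, 97, 25601],
  [7, 11, 17, 37, 41, 47, 53, 73, 389, 2791],
  [7, 11, 19, 31, 37, 53, 59, 73, 131, 13921],
  [7, 13, 17, 19, 23, 31, 37, 67, 181, 87211],
  [7, 13, 17, 19, 31, 37, 41, 67, 73, 257, 353],
  [7, 13, 17, 19, 31, 41, 61, 67, 89, 151, 479],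
  [7, 13, 17, 19, 31, 67, 83, 89, 683, 2221],
  [7, 13, 17, 19, 41, 47, 67, 73, 101, 14401],
  [7, 13, 17, 23, 31, 37, 61, 67, 89, 97, 353],
  [7, 13, 17, 23, 37, 41, 61, 67, 73, 199, 257],
  [7, 13, 17, 31, 41, 47, 67, 101, 277, 4801],
  [7, 13, 17, 31, 47, 59, 61, 97, 193, 5981],
  [7, 13, 17, 41, 47, 61, 67, 73, 683, 1153],
  [7, 13, 19, 23, 59, 61, 73, 89, 101, 9901],
  [7, 17, 19, 23, 31, 37, 67, 73, 97, 32803],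
  [7, 17, 19, 23, 31, 61, 73, 79, 157, 7723],
  [7, 17, 19, 23, 37, 41, 79, 97, 347, 2971],
  [7, 17, 19, 23, 37, 53, 61, 89, 1171, 1453],
  [7, 17, 19, 23, 41, 53, 67, 89, 631, 2003],
  [7, 17, 19, 31, 41, 53, 61, 67, 397, 1613],
  [7, 17, 23, 31, 37, 41, 67, 79, 433, 3191],
  [7, 19, 31, 37, 41, 47, 59, 67, 89, 6529],
  [11, 13, 17, 19, 29, 31, 37, 47, 139, 23311],
  [11, 13, 17, 19, 29, 31, 37, 73, 101, 29191],
  [11, 13, 17, 19, 29, 31, 61, 73, 107, 12721],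
  [11, 13, 17, 19, 29, 41, 43, 61, 97, 28351],
  [11, 13, 17, 19, 29, 41, 61, 71, 109, 127, 257],
  [11, 13, 17, 19, 29, 43, 61, 71, 127, 23311],
  [11, 13, 17, 19, 31, 37, 61, 73, 109, 23311],
  [11, 13, 17, 19, 31, 41, 61, 101, 109, 21871],
  [11, 13, 17, 19, 37, 41, 47, 61, 73, 97, 331],
  [11, 13, 17, 19, 37, 41, 61, 73, 113, 151, 163],
  [11, 13, 17, 29, 37, 41, 43, 47, 71, 25117],
  [11, 13, 17, 31, 37, 41, 43, 61, 71, 28621],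
  [11, 13, 17, 37, 41, 43, 47, 73, 967, 1153],
  [11, 13, 19, 29, 31, 37, 61, 71, 73, 97, 281],
  [11, 13, 19, 29, 37, 41, 43, 61, 71, 127, 331],
  [11, 13, 19, 29, 37, 41, 43, 71, 73, 14449],
  [11, 13, 19, 31, 37, 41, 43, 61, 73, 15121],
  [11, 13, 19, 31, 37, 41, 43, 61, 73, 20161],
  [11, 13, 19, 31, 37, 41, 43, 61, 73, 30241],
  [11, 13, 29, 37, 41, 43, 61, 71, 73, 9871],
  [11, 13, 31, 37, 41, 43, 47, 71, 459271],
  [11, 13, 31, 37, 41, 47, 61, 71, 577, 1009],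
  [11, 17, 19, 29, 31, 37, 41, 43, 73, 8221],
  [11, 17, 19, 29, 31, 53, 71, 79, 281, 2719],
  [11, 17, 19, 29, 37, 43, 61, 71, 73, 13441],
  [11, 17, 29, 31, 41, 43, 53, 61, 79, 97, 101],
  [13, 17, 19, 23, 29, 31, 41, 43, 61, 151, 379],
  [13, 17, 19, 23, 29, 37, 41, 61, 97, 30493],
  [13, 17, 19, 29, 31, 47, 61, 71, 193, 2521],
  [13, 17, 19, 29, 37, 43, 47, 73, 89, 109, 151],
  [13, 17, 19, 29, 37, 47, 61, 71, 139, 3361],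
  [13, 17, 19, 31, 37, 43, 59, 67, 433, 991],
  [13, 17, 19, 31, 37, 59, 67, 73, 97, 7309],
  [13, 17, 23, 29, 31, 41, 43, 61, 73, 97, 271],
  [13, 17, 23, 29, 37, 43, 61, 73, 661, 881],
  [17, 19, 23, 29, 37, 43, 67, 71, 419563]]

def psl : List Nat :=
  nat_lit 5 :: nat_lit 7 :: nat_lit 11 :: nat_lit 13 :: nat_lit 17 :: nat_lit 19 :: nat_lit 23
  :: nat_lit 29 :: nat_lit 31 :: nat_lit 37 :: nat_lit 41 :: nat_lit 43 :: nat_lit 47 ::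
  nat_lit 53 :: nat_lit 59 :: nat_lit 61 :: nat_lit 67 :: nat_lit 71 :: nat_lit 73 ::
  nat_lit 79 :: nat_lit 83 :: nat_lit 89 :: nat_lit 97 :: nat_lit 101 :: nat_lit 103 ::
  nat_lit 107 :: nat_lit 109 :: nat_lit 113 :: nat_lit 127 :: nat_lit 131 :: nat_lit 137 ::
  nat_lit 139 :: nat_lit 149 :: nat_lit 151 :: nat_lit 157 :: nat_lit 163 :: nat_lit 181 ::
  nat_lit 193 :: nat_lit 197 :: nat_lit 199 :: nat_lit 211 :: nat_lit 233 :: nat_lit 241 ::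
  nat_lit 251 :: nat_lit 257 :: nat_lit 271 :: nat_lit 277 :: nat_lit 281 :: nat_lit 313 ::
  nat_lit 317 :: nat_lit 331 :: nat_lit 337 :: nat_lit 347 :: nat_lit 353 :: nat_lit 379 ::
  nat_lit 389 :: nat_lit 397 :: nat_lit 401 :: nat_lit 433 :: nat_lit 463 :: nat_lit 479 ::
  nat_lit 523 :: nat_lit 541 :: nat_lit 577 :: nat_lit 601 :: nat_lit 631 :: nat_lit 641 ::
  nat_lit 661 :: nat_lit 683 :: nat_lit 691 :: nat_lit 769 :: nat_lit 811 :: nat_lit 881 ::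
  nat_lit 919 :: nat_lit 929 :: nat_lit 967 :: nat_lit 991 :: nat_lit 1009 :: nat_lit 1153 ::
  nat_lit 1171 :: nat_lit 1321 :: nat_lit 1381 :: nat_lit 1453 :: nat_lit 1613 :: nat_lit 1657
  :: nat_lit 1697 :: nat_lit 1801 :: nat_lit 2003 :: nat_lit 2113 :: nat_lit 2221 ::
  nat_lit 2521 :: nat_lit 2719 :: nat_lit 2791 :: nat_lit 2971 :: nat_lit 3191 :: nat_lit 3361
  :: nat_lit 3457 :: nat_lit 3761 :: nat_lit 4801 :: nat_lit 5981 :: nat_lit 6073 ::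
  nat_lit 6529 :: nat_lit 7309 :: nat_lit 7723 :: nat_lit 8221 :: nat_lit 9871 :: nat_lit 9901
  :: nat_lit 12721 :: nat_lit 13441 :: nat_lit 13873 :: nat_lit 13921 :: nat_lit 14401 ::
  nat_lit 14449 :: nat_lit 15121 :: nat_lit 20161 :: nat_lit 21871 :: nat_lit 23041 ::
  nat_lit 23311 :: nat_lit 25117 :: nat_lit 25601 :: nat_lit 28351 :: nat_lit 28621 ::
  nat_lit 28921 :: nat_lit 29191 :: nat_lit 30241 :: nat_lit 30493 :: nat_lit 31081 ::
  nat_lit 32803 :: nat_lit 33751 :: nat_lit 38593 :: nat_lit 38737 :: nat_lit 48761 ::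
  nat_lit 56923 :: nat_lit 77761 :: nat_lit 87211 :: nat_lit 419563 :: nat_lit 459271 :: []

def tb : List Nat :=
  nat_lit 932542749584987905 :: nat_lit 292561243007134465 :: nat_lit 60977817398996785 ::
  nat_lit 840140334369033985 :: nat_lit 388219799621120545 :: nat_lit 595847210258006785 ::
  nat_lit 631386973876579921 :: nat_lit 500607712175972401 :: nat_lit 954372120197777281 ::
  nat_lit 206063729626916161 :: nat_lit 292433912163313921 :: nat_lit 821796050053980001 ::
  nat_lit 588497000953262401 :: nat_lit 811363122995025601 :: nat_lit 719748660901471201 ::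
  nat_lit 786139728870336841 :: nat_lit 474165423924953761 :: nat_lit 549126892056744001 ::
  nat_lit 759109975140117601 :: nat_lit 551364698360473921 :: nat_lit 960324211156449601 ::
  nat_lit 263076030916096321 :: nat_lit 828001983642912001 :: nat_lit 885004544586960721 ::
  nat_lit 898578744759693361 :: nat_lit 401143029109059601 :: nat_lit 107473646345582881 ::
  nat_lit 904334530097235601 :: nat_lit 161802381510126721 :: nat_lit 939121207710523201 ::
  nat_lit 963982417355955361 :: nat_lit 492389240718261601 :: nat_lit 535434684152775121 ::
  nat_lit 337365329710615921 :: nat_lit 472774215503036161 :: nat_lit 145671955835893201 ::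
  nat_lit 824113345713824881 :: nat_lit 466038272455922881 :: nat_lit 550099475913193921 ::
  nat_lit 165167398073764801 :: nat_lit 919304495402580001 :: nat_lit 781742913337632961 ::
  nat_lit 809050105303927201 :: nat_lit 132819104923908481 :: nat_lit 466468327336334401 ::
  nat_lit 105083995864811041 :: nat_lit 795319625249392321 :: nat_lit 842622996069610561 ::
  nat_lit 407527558081847281 :: nat_lit 557584369877075905 :: nat_lit 556525759842353665 ::
  nat_lit 528155279806375585 :: nat_lit 913154221514075905 :: nat_lit 667548710705695105 ::
  nat_lit 456030568079905105 :: nat_lit 773872227504234145 :: nat_lit 482300476338187585 ::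
  nat_lit 299436175069338385 :: nat_lit 549639743177314945 :: nat_lit 670760326180408465 ::
  nat_lit 838322556731135785 :: nat_lit 315387156383380081 :: nat_lit 854452092597904801 ::
  nat_lit 138926873519154721 :: nat_lit 897200143769810881 :: nat_lit 819274948066255681 ::
  nat_lit 687969584258958001 :: nat_lit 972341931680920801 :: nat_lit 406933719503392081 ::
  nat_lit 429888319683183361 :: nat_lit 835538634978048001 :: nat_lit 967567877562006721 ::
  nat_lit 984678813779618881 :: nat_lit 992552754875760001 :: nat_lit 891210521869265521 ::
  nat_lit 451506927871677601 :: nat_lit 392040787417877521 :: nat_lit 698554371077320681 ::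
  nat_lit 820086782745067201 :: nat_lit 613333492245231121 :: nat_lit 982871110996251841 ::
  nat_lit 684097136316831601 :: nat_lit 402937155549165601 :: nat_lit 508302975089186641 ::
  nat_lit 823602067336445761 :: nat_lit 831651497200761601 :: nat_lit 908310966772566721 ::
  nat_lit 700405482905045281 :: nat_lit 929860880060950201 :: nat_lit 928270987984343521 ::
  nat_lit 687631187478549601 :: nat_lit 623225093321825281 :: nat_lit 941994447858818641 ::
  nat_lit 851654102047182721 :: nat_lit 398613033120416401 :: nat_lit 941322992050275121 ::
  nat_lit 675243268059495961 :: nat_lit 233977199290561441 :: nat_lit 330668771905558801 ::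
  nat_lit 251684214082988401 :: nat_lit 396149234688093601 :: nat_lit 846197894466010801 ::
  nat_lit 738512452031921281 :: nat_lit 599434969729568401 :: nat_lit 862244549347525201 ::
  nat_lit 470841160757791681 :: nat_lit 867800369866757041 :: nat_lit 385443712197230401 ::
  nat_lit 609359626574425441 :: nat_lit 606618281849106241 :: nat_lit 778825481455067761 ::
  nat_lit 935753739086653201 :: nat_lit 384911310236299561 :: nat_lit 369946205481419281 ::
  nat_lit 493253452067382721 :: nat_lit 739867945239309601 :: nat_lit 844229001984815161 ::
  nat_lit 443176780010771521 :: nat_lit 796959649054215361 :: nat_lit 125042153308793281 ::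
  nat_lit 725490510728387041 :: nat_lit 696636154434220561 :: nat_lit 741616723341858001 ::
  nat_lit 534357251003378881 :: nat_lit 766582697133015841 :: nat_lit 373870985468641921 ::
  nat_lit 973706842941996241 :: nat_lit 428464604853870481 :: nat_lit 351290263839197761 ::
  nat_lit 985345785002090161 :: nat_lit 943030705972758481 :: nat_lit 608160697395174001 ::
  nat_lit 684114616382717521 :: []

noncomputable def force (x : Nat) (f : Nat → Bool) : Bool :=
  @Nat.rec (fun _ => Bool) (f (nat_lit 0)) (fun n _ => f (Nat.succ n)) x

noncomputable def mem' (l : List Nat) (N : Nat) : Bool :=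
  @List.rec Nat (fun _ => Bool) false (fun a _ ih => @Bool.rec (fun _ => Bool) ih true (Nat.beq a N)) l

/-- `2 ^ e mod R = 1` by 10-bit windows. -/
noncomputable def fermat (e R : Nat) : Bool :=
  @Nat.rec (fun _ => Nat → Bool)
    (fun a => Nat.beq a (nat_lit 1))
    (fun i ih a => force (Nat.mod (Nat.mul (Nat.pow a (nat_lit 1024))
        (Nat.pow (nat_lit 2) (Nat.mod (Nat.div e (Nat.pow (nat_lit 1024) i)) (nat_lit 1024)))) R) ih)
    (nat_lit 6) (nat_lit 1)

noncomputable def test3 (k N R : Nat) : Bool :=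
  @Bool.rec (fun _ => Bool) (fermat (Nat.sub N (nat_lit 1)) R)
    (@Bool.rec (fun _ => Bool) false (fermat (Nat.sub N (nat_lit 1)) R)
      (Nat.beq (Nat.mod (Nat.sub N (nat_lit 1)) (Nat.sub R (nat_lit 1))) (nat_lit 0))) (Nat.beq k (nat_lit 1))

noncomputable def test2 (k P R : Nat) : Bool :=
  force (Nat.mul P R) fun N =>
    @Bool.rec (fun _ => Bool) true (mem' tb N) (test3 k N R)

noncomputable def test (b k P V R : Nat) : Bool :=
  @Bool.rec (fun _ => Bool) true
    (@Bool.rec (fun _ => Bool) true (test2 k P R) (Nat.beq (Nat.gcd V R) (nat_lit 1)))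
    (Nat.ble b R)

noncomputable def loop (b k P L V s n : Nat) : Bool :=
  @Nat.rec (fun _ => Bool) true
    (fun j ih => @Bool.rec (fun _ => Bool) false ih
      (force (Nat.add s (Nat.mul L j)) (test b k P V))) n

noncomputable def leaf2 (q k P L V s : Nat) : Bool :=
  @Bool.rec (fun _ => Bool) false
    (force (Nat.pow q k) fun b => 
      loop b k P L V s 
        (Nat.div (Nat.sub (Nat.add (Nat.div (nat_lit 999999999999999999) P) L) s) L))
    (Nat.beq (Nat.mod (Nat.mul P s) L) (nat_lit 1))

noncomputable def leaf (q k P L M V : Nat) : Bool :=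
  force (Nat.mod P L) fun a =>
  force (Nat.mod (Nat.mul
    (Nat.pow (Nat.mod (Nat.pow a (nat_lit 1024)) L) (Nat.div (Nat.sub M (nat_lit 1)) (nat_lit 1024)))
    (Nat.pow a (Nat.mod (Nat.sub M (nat_lit 1)) (nat_lit 1024)))) L) (leaf2 q k P L V)

noncomputable def lcm' (a b : Nat) : Nat := Nat.div (Nat.mul a b) (Nat.gcd a b)

noncomputable def chunk (c k P : Nat) : Bool :=
  @Bool.rec (fun _ => Bool) false
    (@Bool.rec (fun _ => Bool) true false
      (Nat.beq (Nat.mod (Nat.div P (nat_lit 290)) (nat_lit 7)) c))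
    (Nat.beq k (nat_lit 6))

noncomputable def step4 (c q : Nat) (ih : Nat → Nat → Nat → Nat → Nat → Bool)
    (L M V k P : Nat) : Bool :=
  @Bool.rec (fun _ => Bool)
    (force (lcm' L (Nat.sub q (nat_lit 1))) fun L' =>
      force (lcm' M (Nat.mod (Nat.shiftRight lamTab (Nat.mul (nat_lit 11) q)) (nat_lit 2048)))
        fun M' => ih k P L' M' V)
    true (chunk c k P)

noncomputable def step3 (c q : Nat) (ih : Nat → Nat → Nat → Nat → Nat → Bool)
    (k P L M V : Nat) : Bool :=
  force (Nat.mul V q) fun V' =>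
  @Bool.rec (fun _ => Bool) false (ih k P L M V')
    (force (Nat.sub k (nat_lit 1)) fun k' => force (Nat.mul P q) (step4 c q ih L M V' k'))

noncomputable def step2 (c q : Nat) (ih : Nat → Nat → Nat → Nat → Nat → Bool) (k P L M V : Nat) : Bool :=
  @Bool.rec (fun _ => Bool)
    (@Bool.rec (fun _ => Bool) (step3 c q ih k P L M V) (leaf q k P L M V) 
      (Nat.ble (nat_lit 1000000000000000000) (Nat.mul (nat_lit 20) (Nat.mul P L))))
    (leaf q k P L M V)
    (Nat.ble k (nat_lit 1))

noncomputable def step1 (c q : Nat) (ih : Nat → Nat → Nat → Nat → Nat → Bool) (k P L M V : Nat) : Bool :=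
  @Bool.rec (fun _ => Bool) (ih k P L M V) (step2 c q ih k P L M V)
    (Nat.beq (Nat.mul (Nat.gcd L q) (Nat.gcd P (Nat.sub q (nat_lit 1)))) (nat_lit 1))

noncomputable def scan (c : Nat) (l : List Nat) : Nat → Nat → Nat → Nat → Nat → Bool :=
  @List.rec Nat (fun _ => Nat → Nat → Nat → Nat → Nat → Bool)
    (fun _ _ _ _ _ => false)
    (fun q _ ih k P L M V =>
      @Bool.rec (fun _ => Bool) (step1 c q ih k P L M V) true
        (Nat.ble (nat_lit 1000000000000000000) (Nat.mul P (Nat.pow q k)))) l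

theorem brec (c t e : Bool) : @Bool.rec (fun _ => Bool) e t c = cond c t e := by
  cases c <;> rfl

theorem force_eq (x : Nat) (f : Nat → Bool) : force x f = f x := by
  cases x <;> rfl

theorem mem'_mem {l : List ℕ} {N : ℕ} (h : mem' l N = true) : N ∈ l := by
  induction l with
  | nil => exact absurd h (by simp [mem'])
  | cons a l ih =>
    change @Bool.rec (fun _ => Bool) (mem' l N) true (Nat.beq a N) = true at h
    rw [brec] at h
    cases hb : Nat.beq a N
    · rw [hb] at h
      exact List.mem_cons_of_mem _ (ih h)
    · rw [Nat.eq_of_beq_eq_true hb]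
      exact List.mem_cons_self

theorem tb_eq : tb = (goodF ++ badF).map List.prod := by decide +kernel

set_option maxRecDepth 20000 in
theorem allF_prime : ∀ f ∈ goodF ++ badF, ∀ p ∈ f, Nat.Prime p := by
  have h : ∀ f ∈ goodF ++ badF, ∀ p ∈ f, mem' psl p = true := by decide +kernel
  have h2 : ∀ p ∈ psl, Nat.Prime p := by
    unfold psl
    simp only [List.forall_mem_cons, List.not_mem_nil, false_imp_iff, implies_true, and_true]
    norm_num
  exact fun f hf p hp => h2 p (mem'_mem (h f hf p hp))

theorem goodF_ok : ∀ f ∈ goodF, f.Nodup ∧ f.length = 11 ∧ f.prod < 10 ^ 18 ∧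
    ∀ p ∈ f, p - 1 ∣ f.prod - 1 := by decide +kernel

theorem badF_ok : ∀ f ∈ badF, f.length ≠ 11 ∨ ∃ p ∈ f, ¬ p - 1 ∣ f.prod - 1 := by decide +kernel

theorem good_nodup : (goodF.map List.prod).Nodup := by decide +kernel

theorem plist_eq : plist = (List.range 1430).filter (fun p => Nat.ble 3 p &&
    [2, 3, 5, 7, 11, 13, 17, 19, 23, 29, 31, 37].all
      (fun d => Nat.blt 0 (Nat.mod p d) || Nat.beq p d)) := by decide +kernel

theorem mem_plist (p : ℕ) : p ∈ plist ↔ p < 1430 ∧ 3 ≤ p ∧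
    ∀ d ∈ [2, 3, 5, 7, 11, 13, 17, 19, 23, 29, 31, 37], 0 < p % d ∨ p = d := by
  rw [plist_eq]
  simp only [List.mem_filter, List.mem_range, Bool.and_eq_true, Nat.ble_eq, List.all_eq_true,
    Bool.or_eq_true, Nat.beq_eq, Nat.blt_eq]
  rfl

theorem plist_prime (q : ℕ) (h : q ∈ plist) : Nat.Prime q := by
  obtain ⟨h1, h2, h3⟩ := (mem_plist q).1 h
  by_contra hn
  have h4 := Nat.minFac_sq_le_self (by omega) hn
  have h5 := Nat.minFac_prime (n := q) (by omega)
  have h6 := Nat.minFac_dvd q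
  generalize q.minFac = m at *
  have hm : m < 38 := by nlinarith
  have hm2 : m ∈ [2, 3, 5, 7, 11, 13, 17, 19, 23, 29, 31, 37] := by
    revert h5
    interval_cases m <;> simp <;> norm_num
  rcases h3 m hm2 with h | h
  · have := Nat.mod_eq_zero_of_dvd h6
    omega
  · exact hn (h ▸ h5)

theorem plist_le (q : ℕ) (h : q ∈ plist) : q ≤ 1429 := by
  have := ((mem_plist q).1 h).1
  omega

theorem plist_sorted : plist.Pairwise (· < ·) := by
  rw [plist_eq]
  exact List.Pairwise.filter _ List.pairwise_lt_range

theorem plist_complete (p : ℕ) (hp : p.Prime) (h2 : p ≠ 2) : p ∈ plist ∨ 1429 < p := by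
  by_cases hlt : p < 1430
  · left
    have := hp.two_le
    refine (mem_plist p).2 ⟨hlt, by omega, fun d hd => ?_⟩
    by_cases h : p % d = 0
    · right
      rcases (Nat.dvd_prime hp).1 (Nat.dvd_of_mod_eq_zero h) with h | h
      · subst h; simp at hd
      · exact h.symm
    · left; omega
  · right; omega

theorem fermat_true {e R : ℕ} (he : e < 1024 ^ 6) (hR : 1 < R) (h : 2 ^ e ≡ 1 [MOD R]) :
    fermat e R = true := by
  have key : ∀ (i a : ℕ), a < R → a ≡ 2 ^ (e / 1024 ^ i) [MOD R] →
      @Nat.rec (fun _ => Nat → Bool)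
        (fun a => Nat.beq a (nat_lit 1))
        (fun i ih a => force (Nat.mod (Nat.mul (Nat.pow a (nat_lit 1024))
          (Nat.pow (nat_lit 2) (Nat.mod (Nat.div e (Nat.pow (nat_lit 1024) i))
            (nat_lit 1024)))) R) ih) i a = true := by
    intro i
    induction i with
    | zero =>
      intro a ha h1
      rw [pow_zero, Nat.div_one] at h1
      have h2 := h1.trans h
      have h3 : a = 1 := Nat.ModEq.eq_of_lt_of_lt h2 ha hR
      subst h3
      rfl
    | succ i ih =>
      intro a ha h1
      refine (force_eq _ _).trans (ih _ (Nat.mod_lt _ (by omega)) ?_)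
      change (a ^ 1024 * 2 ^ (e / 1024 ^ i % 1024)) % R ≡ _ [MOD R]
      refine (Nat.mod_modEq _ _).trans ?_
      have h2 := (h1.pow 1024).mul_right (2 ^ (e / 1024 ^ i % 1024))
      refine h2.trans ?_
      rw [← pow_mul, ← pow_add, pow_succ, ← Nat.div_div_eq_div_mul, Nat.div_add_mod']
  exact key 6 1 hR (by rw [Nat.div_eq_of_lt he, pow_zero])

theorem test_sound {N P R k b V : ℕ} (hN : N = P * R) (h1 : 1 < R) (hlt : N < 10 ^ 18)
    (hF : 2 ^ (N - 1) ≡ 1 [MOD N]) (hk : k = 1 → R - 1 ∣ N - 1) (hb : b ≤ R)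
    (hV : Nat.Coprime V R) (h : test b k P V R = true) : N ∈ tb := by
  have hf : fermat (N - 1) R = true := by
    refine fermat_true (lt_of_le_of_lt (Nat.sub_le _ _) (hlt.trans (by norm_num))) h1 ?_
    exact hF.of_dvd ⟨P, by rw [hN, mul_comm]⟩
  have h3 : test3 k N R = true := by
    unfold test3
    rw [brec, brec]
    change cond (Nat.beq k 1) (cond (Nat.beq ((N - 1) % (R - 1)) 0) (fermat (N - 1) R) false)
      (fermat (N - 1) R) = true
    rw [hf]
    cases hb : Nat.beq k 1
    · rfl
    · have := hk (Nat.eq_of_beq_eq_true hb)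
      rw [Nat.mod_eq_zero_of_dvd this]
      rfl
  unfold test at h
  rw [brec, brec, Nat.ble_eq_true_of_le hb] at h
  have h4 : Nat.gcd V R = 1 := hV
  rw [h4] at h
  change test2 k P R = true at h
  unfold test2 at h
  rw [force_eq] at h
  change @Bool.rec (fun _ => Bool) true (mem' tb (P * R)) (test3 k (P * R) R) = true at h
  rw [← hN, brec, h3] at h
  exact mem'_mem h

theorem loop_sound {b k P L V s n : ℕ} (h : loop b k P L V s n = true) :
    ∀ j < n, test b k P V (s + L * j) = true := by
  induction n with
  | zero => intro j hj; omega
  | succ n ih =>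
    change @Bool.rec (fun _ => Bool) false (loop b k P L V s n)
      (force (s + L * n) (test b k P V)) = true at h
    rw [brec, force_eq] at h
    have h1 : test b k P V (s + L * n) = true ∧ loop b k P L V s n = true := by
      revert h
      cases test b k P V (s + L * n) <;> simp
    intro j hj
    rcases Nat.lt_succ_iff_lt_or_eq.1 hj with hj | rfl
    · exact ih h1.2 j hj
    · exact h1.1

theorem leaf_sound {N P R q k L M V : ℕ} (hN : N = P * R) (h1 : 1 < R) (hlt : N < 10 ^ 18)
    (hF : 2 ^ (N - 1) ≡ 1 [MOD N]) (hk : k = 1 → R - 1 ∣ N - 1) (hb : q ^ k ≤ R)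
    (hV : Nat.Coprime V R) (hP : 0 < P) (hL : L ∣ N - 1)
    (h : leaf q k P L M V = true) : N ∈ tb := by
  have hN1 : 1 < N := by rw [hN]; nlinarith
  have hL0 : 0 < L := Nat.pos_of_dvd_of_pos hL (by omega)
  unfold leaf at h
  rw [force_eq, force_eq] at h
  revert h
  have hs : ∀ x, Nat.mod x L < L := fun x => Nat.mod_lt x hL0
  generalize hsx : Nat.mod _ L = s
  have hsL : s < L := hsx ▸ hs _
  clear hsx
  intro h
  unfold leaf2 at h
  rw [brec, force_eq] at h
  have h2 : P * s % L = 1 ∧ loop (q ^ k) k P L V s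
      ((999999999999999999 / P + L - s) / L) = true := by
    cases hc : Nat.beq (P * s % L) 1
    · change cond (Nat.beq (P * s % L) 1) _ _ = true at h
      rw [hc] at h
      exact absurd h (by simp)
    · refine ⟨Nat.eq_of_beq_eq_true hc, ?_⟩
      change cond (Nat.beq (P * s % L) 1) _ _ = true at h
      rw [hc] at h
      exact h
  obtain ⟨h3, h4⟩ := h2
  have hL1 : 1 < L := by
    rcases Nat.lt_or_ge 1 L with h | h
    · exact h
    · have : L = 1 := by omega
      subst this
      simp [Nat.mod_one] at h3
  have hPR : P * R ≡ 1 [MOD L] := by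
    rw [← hN]
    exact ((Nat.modEq_iff_dvd' (by omega)).2 hL).symm
  have hPs : P * s ≡ 1 [MOD L] := by
    rw [Nat.ModEq, h3, Nat.mod_eq_of_lt hL1]
  have hRs : R ≡ s [MOD L] := by
    calc R ≡ (P * s) * R [MOD L] := by simpa using (hPs.mul_right R).symm
      _ = (P * R) * s := by ring
      _ ≡ s [MOD L] := by simpa using hPR.mul_right s
  have hmod : R % L = s := by
    rw [Nat.ModEq, Nat.mod_eq_of_lt hsL] at hRs
    exact hRs
  have hR : s + L * (R / L) = R := by
    rw [← hmod]; exact Nat.mod_add_div R L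
  have hX : R ≤ 999999999999999999 / P := by
    rw [Nat.le_div_iff_mul_le hP, mul_comm, ← hN]
    omega
  have hj : R / L < (999999999999999999 / P + L - s) / L := by
    rw [← Nat.succ_le_iff, Nat.le_div_iff_mul_le hL0, Nat.succ_mul, mul_comm]
    omega
  have h5 := loop_sound h4 _ hj
  rw [hR] at h5
  exact test_sound hN h1 hlt hF hk hb hV h5

theorem pow_le_of {R q : ℕ} (hs : Squarefree R) (h : ∀ p : ℕ, p.Prime → p ∣ R → q ≤ p) :
    q ^ R.primeFactors.card ≤ R := by
  conv_rhs => rw [← Nat.prod_primeFactors_of_squarefree hs]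
  apply Finset.pow_card_le_prod
  intro p hp
  exact h p (Nat.prime_of_mem_primeFactors hp) (Nat.dvd_of_mem_primeFactors hp)

theorem scan_sound {N : ℕ} (h1N : 1 < N) (hlt : N < 10 ^ 18) (hsq : Squarefree N)
    (hK : ∀ p : ℕ, p.Prime → p ∣ N → p - 1 ∣ N - 1) (hF : 2 ^ (N - 1) ≡ 1 [MOD N])
    (l : List ℕ) (hl : l.Pairwise (· < ·)) (hp : ∀ q ∈ l, q.Prime) (hle : ∀ q ∈ l, q ≤ 1429) :
    ∀ (k P L M V R : ℕ) (S : Set ℕ), S.Nonempty → (6 < k → ∀ c < 7, c ∈ S) →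
      N = P * R → R.primeFactors.card = k → 1 ≤ k → L ∣ N - 1 → Nat.Coprime V R →
      (∀ p : ℕ, p.Prime → p ∣ R → p ∈ l ∨ 1429 < p) →
      (∀ c ∈ S, scan c l k P L M V = true) → N ∈ tb := by
  induction l with
  | nil =>
    intro k P L M V R S ⟨c, hc⟩ _ _ _ _ _ _ _ h
    exact absurd (h c hc) (by simp [scan])
  | cons q l ih =>
    intro k P L M V R S hS hS7 hN hcard hk hL hV hmem h
    have hl' := List.pairwise_cons.1 hl
    have ih := ih hl'.2 (fun x hx => hp x (List.mem_cons_of_mem _ hx))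
      (fun x hx => hle x (List.mem_cons_of_mem _ hx))
    have hq := hp q List.mem_cons_self
    have hq9 := hle q List.mem_cons_self
    have hRN : R ∣ N := ⟨P, by rw [hN, mul_comm]⟩
    have hPN : P ∣ N := ⟨R, hN⟩
    have hP0 : 0 < P := Nat.pos_of_dvd_of_pos hPN (by omega)
    have hR0 : 0 < R := Nat.pos_of_dvd_of_pos hRN (by omega)
    have hRsq : Squarefree R := hsq.squarefree_of_dvd hRN
    have hcopN : ∀ d, d ∣ N - 1 → Nat.Coprime d N := by
      intro d hd
      have : Nat.Coprime (N - 1) N := by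
        have := Nat.coprime_self_add_right (m := N - 1) (n := 1)
        rw [Nat.sub_add_cancel h1N.le] at this
        exact this.2 (Nat.coprime_one_right _)
      exact Nat.Coprime.coprime_dvd_left hd this
    have hge : ∀ p : ℕ, p.Prime → p ∣ R → q ≤ p := by
      intro p h1 h2
      rcases hmem p h1 h2 with h | h
      · rcases List.mem_cons.1 h with rfl | h
        · exact le_rfl
        · exact (hl'.1 p h).le
      · omega
    have hpow : q ^ k ≤ R := by
      rw [← hcard]; exact pow_le_of hRsq hge
    have h1R : 1 < R := by
      by_contra hc
      have : R = 1 := by omega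
      subst this
      simp at hcard
      omega
    have hprime1 : k = 1 → R - 1 ∣ N - 1 := by
      rintro rfl
      obtain ⟨p, hpp⟩ := Finset.card_eq_one.1 hcard
      have h2 := Nat.prod_primeFactors_of_squarefree hRsq
      rw [hpp, Finset.prod_singleton] at h2
      have h3 : p ∈ R.primeFactors := by rw [hpp]; exact Finset.mem_singleton_self _
      rw [← h2]
      exact hK p (Nat.prime_of_mem_primeFactors h3) ((Nat.dvd_of_mem_primeFactors h3).trans hRN)
    have hbig : Nat.ble 1000000000000000000 (P * q ^ k) = false := by
      rw [Bool.eq_false_iff]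
      intro hc
      have h2 := Nat.le_of_ble_eq_true hc
      have h3 : P * q ^ k ≤ P * R := Nat.mul_le_mul_left _ hpow
      rw [← hN] at h3
      omega
    have hskip : ¬ q ∣ R → ∀ p : ℕ, p.Prime → p ∣ R → p ∈ l ∨ 1429 < p := by
      intro hnq p h1 h2
      rcases hmem p h1 h2 with h | h
      · rcases List.mem_cons.1 h with rfl | h
        · exact absurd h2 hnq
        · exact Or.inl h
      · exact Or.inr h
    have hst1 : ∀ c ∈ S, step1 c q (scan c l) k P L M V = true := by
      intro c hc
      have := h c hc
      change @Bool.rec (fun _ => Bool) (step1 c q (scan c l) k P L M V) true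
        (Nat.ble 1000000000000000000 (P * q ^ k)) = true at this
      rw [hbig] at this
      exact this
    cases hall : Nat.beq (Nat.gcd L q * Nat.gcd P (q - 1)) 1
    · have hnq : ¬ q ∣ R := by
        intro hqR
        have hqN := hqR.trans hRN
        have e1 : Nat.gcd L q = 1 := Nat.Coprime.coprime_dvd_right hqN (hcopN L hL)
        have e2 : Nat.gcd P (q - 1) = 1 :=
          (Nat.Coprime.coprime_dvd_right hPN (hcopN _ (hK q hq hqN))).symm
        rw [e1, e2] at hall
        exact absurd hall (by decide)
      refine ih k P L M V R S hS hS7 hN hcard hk hL hV (hskip hnq) ?_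
      intro c hc
      have := hst1 c hc
      change @Bool.rec (fun _ => Bool) (scan c l k P L M V) _
        (Nat.beq (Nat.gcd L q * Nat.gcd P (q - 1)) 1) = true at this
      rw [hall] at this
      exact this
    · have hst2 : ∀ c ∈ S, step2 c q (scan c l) k P L M V = true := by
        intro c hc
        have := hst1 c hc
        change @Bool.rec (fun _ => Bool) _ (step2 c q (scan c l) k P L M V)
          (Nat.beq (Nat.gcd L q * Nat.gcd P (q - 1)) 1) = true at this
        rw [hall] at this
        exact this
      obtain ⟨c1, hc1⟩ := hS
      by_cases hleaf : leaf q k P L M V = true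
      · exact leaf_sound hN h1R hlt hF hprime1 hpow hV hP0 hL hleaf
      have hst3 : 1 < k ∧ ∀ c ∈ S, step3 c q (scan c l) k P L M V = true := by
        rw [Bool.not_eq_true] at hleaf
        constructor
        · by_contra hk1
          have := hst2 c1 hc1
          unfold step2 at this
          rw [brec, brec, hleaf, Nat.ble_eq_true_of_le (show k ≤ 1 by omega)] at this
          exact absurd this (by simp)
        · intro c hc
          have := hst2 c hc
          unfold step2 at this
          rw [brec, brec, hleaf] at this
          revert this
          cases Nat.ble k 1 <;> cases Nat.ble 1000000000000000000 (Nat.mul 20 (Nat.mul P L)) <;>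
            simp
      obtain ⟨hk1, hst3⟩ := hst3
      have hst3' : ∀ c ∈ S, step4 c q (scan c l) L M (V * q) (k - 1) (P * q) = true ∧
          scan c l k P L M (V * q) = true := by
        intro c hc
        have := hst3 c hc
        unfold step3 at this
        rw [force_eq, force_eq, force_eq, brec] at this
        change cond (step4 c q (scan c l) L M (V * q) (k - 1) (P * q))
          (scan c l k P L M (V * q)) false = true at this
        revert this
        cases step4 c q (scan c l) L M (V * q) (k - 1) (P * q) <;> simp
      by_cases hqR : q ∣ R
      · obtain ⟨R', rfl⟩ := hqR
        have hqN := (Dvd.intro _ rfl).trans hRN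
        have hcop : Nat.Coprime q R' := Nat.coprime_of_squarefree_mul hRsq
        have hcard' : R'.primeFactors.card = k - 1 := by
          rw [hcop.primeFactors_mul, hq.primeFactors, Finset.card_union_of_disjoint,
            Finset.card_singleton] at hcard
          · omega
          · have := hcop.disjoint_primeFactors
            rwa [hq.primeFactors] at this
        have hmem' : ∀ p : ℕ, p.Prime → p ∣ R' → p ∈ l ∨ 1429 < p := by
          intro p h1 h2
          rcases hmem p h1 (h2.mul_left q) with h | h
          · rcases List.mem_cons.1 h with rfl | h
            · exact absurd h2 ((Nat.Prime.coprime_iff_not_dvd hq).1 hcop)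
            · exact Or.inl h
          · exact Or.inr h
        have hL' : lcm' L (q - 1) ∣ N - 1 := Nat.lcm_dvd hL (hK q hq hqN)
        have hV' : Nat.Coprime (V * q) R' :=
          Nat.Coprime.mul_left (Nat.Coprime.coprime_dvd_right (Dvd.intro_left _ rfl) hV) hcop
        have hst4 : ∀ c ∈ S, chunk c (k - 1) (P * q) = false →
            scan c l (k - 1) (P * q) (lcm' L (q - 1))
              (lcm' M (Nat.mod (Nat.shiftRight lamTab (Nat.mul 11 q)) 2048)) (V * q) = true := by
          intro c hc hch
          have := (hst3' c hc).1
          unfold step4 at this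
          rw [brec, hch, force_eq, force_eq] at this
          exact this
        by_cases hk6 : k - 1 = 6
        · have hc0 : P * q / 290 % 7 < 7 := Nat.mod_lt _ (by norm_num)
          refine ih (k - 1) (P * q) _ (lcm' M (Nat.mod (Nat.shiftRight lamTab (Nat.mul 11 q)) 2048)) (V * q) R' {P * q / 290 % 7} ⟨_, rfl⟩
            (by intro h; omega) (by rw [hN]; ring) hcard' (by omega) hL' hV' hmem' ?_
          · intro c hc
            rw [Set.mem_singleton_iff] at hc
            subst hc
            refine hst4 _ (hS7 (by omega) _ hc0) ?_
            unfold chunk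
            rw [hk6, brec, brec]
            change cond true (cond (Nat.beq (P * q / 290 % 7) (P * q / 290 % 7)) false true)
              false = false
            rw [Nat.beq_refl]
            rfl
        · refine ih (k - 1) (P * q) _ (lcm' M (Nat.mod (Nat.shiftRight lamTab
            (Nat.mul 11 q)) 2048)) (V * q) R' S ⟨c1, hc1⟩
            (by intro h; exact hS7 (by omega)) (by rw [hN]; ring) hcard' (by omega) hL' hV' hmem' ?_
          intro c hc
          refine hst4 c hc ?_
          unfold chunk
          rw [brec]
          have : Nat.beq (k - 1) 6 = false := by
            rw [Bool.eq_false_iff]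
            intro h
            exact hk6 (Nat.eq_of_beq_eq_true h)
          rw [this]
          rfl
      · refine ih k P L M (V * q) R S ⟨c1, hc1⟩ hS7 hN hcard hk hL ?_ (hskip hqR)
          (fun c hc => (hst3' c hc).2)
        exact Nat.Coprime.mul_left hV ((Nat.Prime.coprime_iff_not_dvd hq).2 hqR)

theorem scan_0 : scan 0 plist 11 1 2 1 1 = true := by decide +kernel

theorem scan_1 : scan 1 plist 11 1 2 1 1 = true := by decide +kernel

theorem scan_2 : scan 2 plist 11 1 2 1 1 = true := by decide +kernel

theorem scan_3 : scan 3 plist 11 1 2 1 1 = true := by decide +kernel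

theorem scan_4 : scan 4 plist 11 1 2 1 1 = true := by decide +kernel

theorem scan_5 : scan 5 plist 11 1 2 1 1 = true := by decide +kernel

theorem scan_6 : scan 6 plist 11 1 2 1 1 = true := by decide +kernel

theorem mem_tb {N : ℕ} (hlt : N < 10 ^ 18) (hC : IsCarmichael N)
    (hcard : N.primeFactors.card = 11) : N ∈ tb := by
  have h1 := hC.1
  have hsq := carm_sq hC
  have hK := carm_dvd hC
  have hodd : 2 ∣ N - 1 := by
    obtain ⟨p, hp, hp2⟩ : ∃ p ∈ N.primeFactors, p ≠ 2 := by
      by_contra hc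
      push Not at hc
      have : N.primeFactors ⊆ {2} := fun p hp => Finset.mem_singleton.2 (hc p hp)
      have := Finset.card_le_card this
      rw [hcard, Finset.card_singleton] at this
      omega
    have hpp := Nat.prime_of_mem_primeFactors hp
    have h2 := hK p hpp (Nat.dvd_of_mem_primeFactors hp)
    have h3 := hpp.eq_two_or_odd
    exact (show 2 ∣ p - 1 by omega).trans h2
  have hF := hC.2.2 2 (by
    rw [Nat.coprime_comm, Nat.coprime_two_right]
    rw [Nat.odd_iff]
    omega)
  refine scan_sound h1 hlt hsq hK hF plist plist_sorted plist_prime plist_le 11 1 2 1 1 N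
    {c | c < 7} ⟨0, by simp⟩ (fun _ c hc => hc) (one_mul N).symm hcard (by norm_num) hodd
    (Nat.coprime_one_left N) ?_ ?_
  · intro p hp hpN
    refine plist_complete p hp ?_
    rintro rfl
    omega
  · intro c hc
    have hc : c < 7 := hc
    interval_cases c
    · exact scan_0
    · exact scan_1
    · exact scan_2
    · exact scan_3
    · exact scan_4
    · exact scan_5
    · exact scan_6

theorem pf_list {f : List ℕ} (h : ∀ p ∈ f, Nat.Prime p) : f.prod.primeFactors = f.toFinset := by
  have := Nat.primeFactorsList_unique (l := f) rfl h
  unfold Nat.primeFactors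
  exact (List.toFinset_eq_of_perm _ _ this).symm

theorem carmichael_count_eleven_prime_factors :
    {N : ℕ | N < 10 ^ 18 ∧ IsCarmichael N ∧ N.primeFactors.card = 11}.ncard = 49 := by
  have hset : {N : ℕ | N < 10 ^ 18 ∧ IsCarmichael N ∧ N.primeFactors.card = 11} =
      ((goodF.map List.prod).toFinset : Set ℕ) := by
    ext N
    simp only [Set.mem_setOf_eq, Finset.mem_coe, List.mem_toFinset]
    constructor
    · rintro ⟨hlt, hC, hcard⟩
      have h := mem_tb hlt hC hcard
      rw [tb_eq, List.map_append, List.mem_append] at h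
      rcases h with h | h
      · exact h
      · exfalso
        obtain ⟨f, hf, rfl⟩ := List.mem_map.1 h
        have hpr := allF_prime f (List.mem_append_right _ hf)
        have hpf := Nat.primeFactorsList_unique (l := f) rfl hpr
        have hnd : f.Nodup := hpf.nodup_iff.2
          ((Nat.squarefree_iff_nodup_primeFactorsList (by have := hC.1; omega)).1 (carm_sq hC))
        rw [pf_list hpr, List.toFinset_card_of_nodup hnd] at hcard
        rcases badF_ok f hf with h | ⟨p, hp, hnd⟩
        · exact h hcard
        · exact hnd (carm_dvd hC p (hpr p hp) (List.dvd_prod hp))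
    · intro h
      obtain ⟨f, hf, rfl⟩ := List.mem_map.1 h
      obtain ⟨hnd, hlen, hlt, hdv⟩ := goodF_ok f hf
      have hpr := allF_prime f (List.mem_append_left _ hf)
      have hpf := Nat.primeFactorsList_unique (l := f) rfl hpr
      have hcard : f.prod.primeFactors.card = 11 := by
        rw [pf_list hpr, List.toFinset_card_of_nodup hnd, hlen]
      have h0 : f.prod ≠ 0 := by
        intro h0; rw [h0] at hcard; simp at hcard
      have h1 : f.prod ≠ 1 := by
        intro h0; rw [h0] at hcard; simp at hcard
      refine ⟨hlt, carm_of (by omega) ?_ ?_ ?_, hcard⟩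
      · intro hp
        rw [hp.primeFactors, Finset.card_singleton] at hcard
        omega
      · exact (Nat.squarefree_iff_nodup_primeFactorsList h0).2 (hpf.nodup_iff.1 hnd)
      · intro p hp hpd
        have : p ∈ f.prod.primeFactors := Nat.mem_primeFactors.2 ⟨hp, hpd, h0⟩
        rw [pf_list hpr, List.mem_toFinset] at this
        exact hdv p this
  rw [hset, Set.ncard_coe_finset, List.toFinset_card_of_nodup good_nodup, List.length_map]
  rfl
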